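/- Let l ≥ 3 and let β ∈ R^{l−1} be an admissible function of z₁,…,z_{l−1}. Then Tℰβ is an admissible function in R^l; that is, Tℰβ is (4,…,4)-regular in the l variables z₁,…,z_l, homogeneous of degree −2l, and all its components of negative degree and of degree 1 (with respect to every partition and weights d_i = 2) vanish. -/

import Mathlib

open scoped Classical

noncomputable section

namespace Griess

open MvPolynomial

variable {k : Type} [Field k]

/-- The field `k(z₁,…,z_l)` of rational functions over `k` in `l` variables. -/
abbrev RF (k : Type) [Field k] (l : ℕ) : Type := FractionRing (MvPolynomial (Fin l) k)

/-- The variable `zᵢ` as an element of the rational function field. -/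
def zv {k : Type} [Field k] {l : ℕ} (i : Fin l) : RF k l :=
  algebraMap (MvPolynomial (Fin l) k) (RF k l) (MvPolynomial.X i)

/-- The space `Φ^l` of rational functions of the form
`p(z₁,…,z_l) · ∏_{i<j} (zᵢ - z_j)^{k_{ij}}`. -/
def Phi (k : Type) [Field k] (l : ℕ) : Set (RF k l) :=
  { x | ∃ (p : MvPolynomial (Fin l) k) (e : Fin l → Fin l → ℤ),
      x = algebraMap (MvPolynomial (Fin l) k) (RF k l) p *
        ∏ i : Fin l, ∏ j : Fin l, (if i < j then (zv i - zv j) ^ e i j else 1) }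

/-- `D` is the family of partial derivative operators `∂_{z₁},…,∂_{z_l}`:
a family of `k`-linear derivations with `D i (z j) = δ_{ij}`. -/
def IsPartialDeriv {l : ℕ} (D : Fin l → Derivation k (RF k l) (RF k l)) : Prop :=
  ∀ i j : Fin l, D i (zv j) = if j = i then 1 else 0

/-- The operator `Δ = Σᵢ ∂_{zᵢ}`. -/
def Delta {l : ℕ} (D : Fin l → Derivation k (RF k l) (RF k l)) (α : RF k l) : RF k l :=
  ∑ i, D i α

/-- The operator `Δ*(n₁,…,n_l) = Σᵢ (zᵢ² ∂_{zᵢ} + nᵢ zᵢ)`. -/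
def DeltaStar {l : ℕ} (D : Fin l → Derivation k (RF k l) (RF k l)) (n : Fin l → ℤ)
    (α : RF k l) : RF k l :=
  ∑ i, ((zv i) ^ 2 * D i α + (n i : RF k l) * zv i * α)

section Subst

variable {l : ℕ}

/-- The embedding of polynomials in `z₁,…,z_l` into rational functions of
`z₁,…,z_l` and one extra variable `t` (`= RatFunc.X`). -/
def toRatFuncHom (k : Type) [Field k] (l : ℕ) :
    Polynomial (MvPolynomial (Fin l) k) →+* RatFunc (RF k l) :=
  (algebraMap (Polynomial (RF k l)) (RatFunc (RF k l))).comp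
    (Polynomial.mapRingHom (algebraMap (MvPolynomial (Fin l) k) (RF k l)))

lemma toRatFuncHom_injective : Function.Injective (toRatFuncHom k l) := by
  have h1 : Function.Injective (algebraMap (Polynomial (RF k l)) (RatFunc (RF k l))) :=
    IsFractionRing.injective _ _
  have h2 : Function.Injective
      (Polynomial.mapRingHom (algebraMap (MvPolynomial (Fin l) k) (RF k l))) :=
    Polynomial.map_injective _ (IsFractionRing.injective _ _)
  exact fun a b hab => h2 (h1 hab)

/-- Polynomial level substitution `z_j ↦ t·z_j` for `j ∈ J`. -/
def scaleAux (k : Type) [Field k] (l : ℕ) (J : Finset (Fin l)) :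
    MvPolynomial (Fin l) k →+* Polynomial (MvPolynomial (Fin l) k) :=
  (MvPolynomial.aeval (R := k) fun i =>
    if i ∈ J then Polynomial.X * Polynomial.C (MvPolynomial.X i)
    else Polynomial.C (MvPolynomial.X i)).toRingHom

lemma scaleAux_injective (J : Finset (Fin l)) :
    Function.Injective (scaleAux k l J) := by
  have h : (Polynomial.evalRingHom (1 : MvPolynomial (Fin l) k)).comp (scaleAux k l J)
      = RingHom.id _ := by
    apply MvPolynomial.ringHom_ext
    · intro r; simp [scaleAux]
    · intro i; by_cases hi : i ∈ J <;> simp [scaleAux, hi]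
  intro p q hpq
  have hp := DFunLike.congr_fun h p
  have hq := DFunLike.congr_fun h q
  simp only [RingHom.comp_apply, RingHom.id_apply] at hp hq
  rw [← hp, ← hq, hpq]

/-- The substitution `z_j ↦ t·z_j` (for `j ∈ J`), as a map from rational functions
in `z₁,…,z_l` to rational functions in `z₁,…,z_l` and `t`.  Reading off the
coefficients of the Laurent expansion in `t` at `t = 0` of `scaleJ J α` yields the
decomposition of `α` into its homogeneous components with respect to the total degree
in the variables `{z_j : j ∈ J}`, i.e. the expansion of `α` in the domain where the
variables of `J` are much smaller than the remaining variables. -/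
def scaleJ (J : Finset (Fin l)) : RF k l →+* RatFunc (RF k l) :=
  IsFractionRing.lift (g := (toRatFuncHom k l).comp (scaleAux k l J))
    (fun a b hab => scaleAux_injective J (toRatFuncHom_injective hab))

/-- Polynomial level substitution `z_i ↦ z_j + t`. -/
def subPairAux (k : Type) [Field k] (l : ℕ) (i j : Fin l) :
    MvPolynomial (Fin l) k →+* Polynomial (MvPolynomial (Fin l) k) :=
  (MvPolynomial.aeval (R := k) fun s =>
    if s = i then Polynomial.X + Polynomial.C (MvPolynomial.X j)
    else Polynomial.C (MvPolynomial.X s)).toRingHom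

lemma subPairAux_injective (i j : Fin l) :
    Function.Injective (subPairAux k l i j) := by
  have h : (Polynomial.evalRingHom (MvPolynomial.X i - MvPolynomial.X j)).comp
      (subPairAux k l i j) = RingHom.id _ := by
    apply MvPolynomial.ringHom_ext
    · intro r; simp [subPairAux]
    · intro s; by_cases hs : s = i <;> simp [subPairAux, hs]
  intro p q hpq
  have hp := DFunLike.congr_fun h p
  have hq := DFunLike.congr_fun h q
  simp only [RingHom.comp_apply, RingHom.id_apply] at hp hq
  rw [← hp, ← hq, hpq]

/-- The substitution `z_i ↦ z_j + t`, as a map from rational functions in `z₁,…,z_l`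
to rational functions in the variables `z₁,…,z_l` and `t`.  Reading off the Laurent
coefficients in `t` at `t = 0` yields the expansion of a rational function in powers
of `z_i - z_j`, with coefficients not involving `z_i`. -/
def subPair (i j : Fin l) : RF k l →+* RatFunc (RF k l) :=
  IsFractionRing.lift (g := (toRatFuncHom k l).comp (subPairAux k l i j))
    (fun a b hab => subPairAux_injective i j (toRatFuncHom_injective hab))

end Subst

/-- The coefficient of `tᵐ` in the Laurent expansion at `t = 0` of a rational
function of `t`. -/
def lcoeff {L : Type} [Field L] (m : ℤ) (f : RatFunc L) : L :=
  (f : LaurentSeries L).coeff m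

/-- The component `(α)_n` of `α` of degree `n` with respect to the partition
`{1,…,l} = Jᶜ ⊔ J` and the weights `d`:  the part of the expansion of `α` in the
domain where the variables of `J` are much smaller than those of `Jᶜ` whose total
degree in the variables `{z_j : j ∈ J}` equals `n - Σ_{j∈J} d_j`. -/
def component {l : ℕ} (J : Finset (Fin l)) (d : Fin l → ℤ) (n : ℤ) (α : RF k l) :
    RF k l :=
  lcoeff (n - ∑ j ∈ J, d j) (scaleJ J α)

/-- `α` is homogeneous of total degree `d` in the variables `{z_i : i ∈ S}`:
substituting `z_i ↦ t·z_i` for `i ∈ S` multiplies `α` by `t^d`. -/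
def IsHomogeneousOn {l : ℕ} (S : Finset (Fin l)) (d : ℤ) (α : RF k l) : Prop :=
  scaleJ S α = RatFunc.X ^ d * RatFunc.C α

/-- `ρ^{(m)}_{ij} α`: the coefficient of `(z_i - z_j)^m` in the expansion of `α`
in powers of `z_i - z_j` (the coefficients do not involve `z_i`). -/
def rho {l : ℕ} (i j : Fin l) (m : ℤ) (α : RF k l) : RF k l :=
  lcoeff m (subPair i j α)

/-- `α` is a rational function of the variables `{z_i : i ∈ S}` only. -/
def dependsOnlyOn {l : ℕ} (S : Finset (Fin l)) (α : RF k l) : Prop :=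
  α ∈ Subfield.closure (Set.range (algebraMap k (RF k l)) ∪ {x | ∃ i ∈ S, x = zv i})

/-- `α` is an admissible function of the variables `{z_i : i ∈ S}` (the space
`R^{|S|}`):  `α ∈ Φ` is a rational function of the variables of `S` only, it is
`(4,…,4)`-regular and homogeneous of degree `-2|S|` in these variables, and all its
components of negative degree, as well as those of degree `1`, vanish (with respect
to every partition of `S` and all weights equal to `2`). -/
def Admissible {l : ℕ} (D : Fin l → Derivation k (RF k l) (RF k l)) (S : Finset (Fin l))
    (α : RF k l) : Prop :=
  α ∈ Phi k l ∧ dependsOnlyOn S α ∧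
    (∑ i ∈ S, ((zv i) ^ 2 * D i α + 4 * zv i * α)) = 0 ∧
    IsHomogeneousOn S (-(2 * (S.card : ℤ))) α ∧
    ∀ J ⊆ S, ∀ n : ℤ, (n < 0 ∨ n = 1) → component J (fun _ => 2) n α = 0

/-- `α` is an indecomposable admissible function of the variables `{z_i : i ∈ S}`
(the space `R₀^{|S|}`): admissible, and all the components `(α)₀` with respect to
partitions of `S` into two nonempty parts vanish. -/
def AdmissibleInd {l : ℕ} (D : Fin l → Derivation k (RF k l) (RF k l))
    (S : Finset (Fin l)) (α : RF k l) : Prop :=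
  Admissible D S α ∧
    ∀ J ⊆ S, J ≠ ∅ → J ≠ S → component J (fun _ => 2) 0 α = 0

section Shift

variable {l : ℕ}

/-- Polynomial level substitution `z_s ↦ z_s - z_t` for `s ∈ S`. -/
def shiftAuxP (k : Type) [Field k] (l : ℕ) (S : Finset (Fin l)) (t : Fin l) :
    MvPolynomial (Fin l) k →+* MvPolynomial (Fin l) k :=
  (MvPolynomial.aeval (R := k) fun s =>
    if s ∈ S then MvPolynomial.X s - MvPolynomial.X t else MvPolynomial.X s).toRingHom

lemma shiftAuxP_injective (S : Finset (Fin l)) (t : Fin l) (ht : t ∉ S) :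
    Function.Injective (shiftAuxP k l S t) := by
  have h : ((MvPolynomial.aeval (R := k) fun s =>
      if s ∈ S then MvPolynomial.X s + MvPolynomial.X t
      else MvPolynomial.X s).toRingHom).comp (shiftAuxP k l S t) = RingHom.id _ := by
    apply MvPolynomial.ringHom_ext
    · intro r; simp [shiftAuxP]
    · intro s
      by_cases hs : s ∈ S
      · have hst : s ≠ t := fun hst => ht (hst ▸ hs)
        simp [shiftAuxP, hs, ht]
      · simp [shiftAuxP, hs]
  intro p q hpq
  have hp := DFunLike.congr_fun h p
  have hq := DFunLike.congr_fun h q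
  simp only [RingHom.comp_apply, RingHom.id_apply] at hp hq
  rw [← hp, ← hq, hpq]

/-- The shift operator substituting `z_s - z_t` for `z_s`, for all `s ∈ S`. -/
def shiftT (S : Finset (Fin l)) (t : Fin l) (ht : t ∉ S) : RF k l →+* RF k l :=
  IsFractionRing.lift
    (g := (algebraMap (MvPolynomial (Fin l) k) (RF k l)).comp (shiftAuxP k l S t))
    (fun a b hab =>
      shiftAuxP_injective S t ht (IsFractionRing.injective _ _ hab))

/-- The operator `ℰ = Σ_{s ∈ S} (-z_s⁻¹ ∂_{z_s} + 2 z_s⁻²)`. -/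
def curlyE {l : ℕ} (D : Fin l → Derivation k (RF k l) (RF k l)) (S : Finset (Fin l))
    (β : RF k l) : RF k l :=
  ∑ s ∈ S, (-((zv s)⁻¹ * D s β) + 2 * (zv s) ^ (-2 : ℤ) * β)

end Shift

end Griess

namespace Griess

section partA0
open scoped RatFunc

def toL (L : Type) [Field L] : RatFunc L →+* LaurentSeries L :=
  algebraMap (RatFunc L) (LaurentSeries L)

lemma toL_C {L : Type} [Field L] (x : L) : toL L (RatFunc.C x) = HahnSeries.C x := by
  unfold toL
  rw [← RatFunc.algebraMap_C, ← IsScalarTower.algebraMap_apply (Polynomial L) (RatFunc L) (LaurentSeries L)]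
  simp

lemma toL_X {L : Type} [Field L] : toL L RatFunc.X = HahnSeries.single 1 1 := RatFunc.coe_X

lemma lcoeff_eq {L : Type} [Field L] (m : ℤ) (f : RatFunc L) : lcoeff m f = (toL L f).coeff m := rfl

end partA0

section partA
variable {k : Type} [Field k] {l : ℕ}

lemma RF_frac (x : RF k l) : ∃ a b : MvPolynomial (Fin l) k,
    algebraMap _ (RF k l) b ≠ 0 ∧ x * algebraMap _ (RF k l) b = algebraMap _ (RF k l) a := by
  obtain ⟨a, b, hb, h⟩ := IsFractionRing.div_surjective (A := MvPolynomial (Fin l) k) x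
  have hb' : algebraMap _ (RF k l) b ≠ 0 :=
    IsFractionRing.to_map_ne_zero_of_mem_nonZeroDivisors hb
  exact ⟨a, b, hb', by rw [← h]; field_simp⟩

lemma derExt {L : Type} [Field L] (φ : RF k l →+* L) (δ : RF k l →+ L)
    (hmul : ∀ x y, δ (x * y) = φ x * δ y + φ y * δ x)
    (hk : ∀ c : k, δ (algebraMap k (RF k l) c) = 0)
    (hz : ∀ i, δ (zv i) = 0) (x : RF k l) : δ x = 0 := by
  have hp : ∀ p : MvPolynomial (Fin l) k, δ (algebraMap _ (RF k l) p) = 0 := by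
    intro p
    induction p using MvPolynomial.induction_on with
    | C a =>
      have := hk a
      rwa [IsScalarTower.algebraMap_apply k (MvPolynomial (Fin l) k) (RF k l)] at this
    | add p q hp hq => rw [map_add, map_add, hp, hq, add_zero]
    | mul_X p i hp =>
      have := hz i
      unfold zv at this
      rw [map_mul, hmul, hp, this, mul_zero, mul_zero, add_zero]
  obtain ⟨a, b, hb, h⟩ := RF_frac x
  have h1 := hmul x (algebraMap _ (RF k l) b)
  rw [h, hp, hp, mul_zero, zero_add] at h1
  have : φ (algebraMap _ (RF k l) b) ≠ 0 := by simpa using hb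
  exact (mul_eq_zero.mp h1.symm).resolve_left this

lemma der_ext (d e : Derivation k (RF k l) (RF k l)) (h : ∀ i, d (zv i) = e (zv i)) : d = e := by
  ext x
  have := derExt (RingHom.id _) ((d - e : Derivation k (RF k l) (RF k l)) : RF k l →+ RF k l) ?_ ?_ ?_ x
  · simpa [sub_eq_zero] using this
  · intro x y
    simp
  · intro c; simp
  · intro i; simp [h]

variable {D : Fin l → Derivation k (RF k l) (RF k l)} (hD : IsPartialDeriv D)
include hD

lemma D_comm (i j : Fin l) (x : RF k l) : D i (D j x) = D j (D i x) := by
  have : ⁅D i, D j⁆ = (0 : Derivation k (RF k l) (RF k l)) := by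
    apply der_ext
    intro m
    rw [Derivation.commutator_apply, hD, hD]
    split_ifs <;> simp
  have := congrArg (fun d => d x) this
  simpa [Derivation.commutator_apply, sub_eq_zero] using this

lemma D_poly (i : Fin l) (p : MvPolynomial (Fin l) k) :
    D i (algebraMap _ (RF k l) p) = algebraMap _ (RF k l) (MvPolynomial.pderiv i p) := by
  induction p using MvPolynomial.induction_on with
  | C a =>
    have : (algebraMap (MvPolynomial (Fin l) k) (RF k l)) (MvPolynomial.C a) = algebraMap k _ a := by
      rw [IsScalarTower.algebraMap_apply k (MvPolynomial (Fin l) k) (RF k l)]; rfl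
    rw [this]; simp
  | add p q hp hq => simp [hp, hq]
  | mul_X p j hp =>
    have := hD i j
    unfold zv at this
    rw [map_mul, Derivation.leibniz, hp, this, Derivation.leibniz, MvPolynomial.pderiv_X]
    by_cases h : j = i
    · subst h; simp
    · simp [h, Pi.single_apply, Ne.symm h]

omit hD in
/-- coefficientwise application -/
def cD (d : Derivation k (RF k l) (RF k l)) : LaurentSeries (RF k l) →+ LaurentSeries (RF k l) where
  toFun x := x.map (d : RF k l →+ RF k l)
  map_zero' := by ext; simp
  map_add' x y := by ext; simp

omit hD in
lemma cD_coeff (d : Derivation k (RF k l) (RF k l)) (x : LaurentSeries (RF k l)) (n : ℤ) :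
    (cD d x).coeff n = d (x.coeff n) := rfl

omit hD in
lemma cD_mul (d : Derivation k (RF k l) (RF k l)) (x y : LaurentSeries (RF k l)) :
    cD d (x * y) = x * cD d y + y * cD d x := by
  have hs : ∀ x : LaurentSeries (RF k l), (cD d x).support ⊆ x.support := by
    intro x n hn h
    apply hn
    simp [cD_coeff, h]
  ext n
  rw [mul_comm y, cD_coeff, HahnSeries.coeff_add, HahnSeries.coeff_mul,
    HahnSeries.coeff_mul_right' y.isPWO_support (hs y),
    HahnSeries.coeff_mul_left' x.isPWO_support (hs x), map_sum, ← Finset.sum_add_distrib]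
  refine Finset.sum_congr rfl fun ij _ => ?_
  rw [Derivation.leibniz, cD_coeff, cD_coeff]
  simp [mul_comm]

omit hD in
lemma cD_C (d : Derivation k (RF k l) (RF k l)) (x : RF k l) :
    cD d (HahnSeries.C x) = HahnSeries.C (d x) := by
  ext n
  rw [cD_coeff, HahnSeries.C_apply, HahnSeries.C_apply, HahnSeries.coeff_single, HahnSeries.coeff_single]
  split_ifs <;> simp

omit hD in
lemma cD_single (d : Derivation k (RF k l) (RF k l)) (m : ℤ) :
    cD d (HahnSeries.single m 1) = 0 := by
  ext n
  rw [cD_coeff, HahnSeries.coeff_single]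
  split_ifs <;> simp

omit hD in
/-- `t^m` -/
abbrev tp (k : Type) [Field k] (l : ℕ) (m : ℤ) : LaurentSeries (RF k l) := HahnSeries.single m 1

omit hD in
def phi (J : Finset (Fin l)) : RF k l →+* LaurentSeries (RF k l) :=
  (toL (RF k l)).comp (scaleJ J)

omit hD in
lemma scaleJ_zv (J : Finset (Fin l)) (i : Fin l) :
    scaleJ J (zv i : RF k l) = if i ∈ J then RatFunc.X * RatFunc.C (zv i : RF k l) else RatFunc.C (zv i : RF k l) := by
  unfold scaleJ zv
  erw [IsFractionRing.lift_algebraMap]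
  split_ifs with h
  · simp [scaleAux, toRatFuncHom, h]
    exact mul_comm _ _
  · simp [scaleAux, toRatFuncHom, h]

omit hD in
lemma scaleJ_k (J : Finset (Fin l)) (c : k) :
    scaleJ (k := k) J (algebraMap k _ c) = RatFunc.C (algebraMap k _ c) := by
  rw [IsScalarTower.algebraMap_apply k (MvPolynomial (Fin l) k) (RF k l)]
  unfold scaleJ
  erw [IsFractionRing.lift_algebraMap]
  simp [scaleAux, toRatFuncHom, MvPolynomial.algebraMap_eq]

omit hD in
lemma coe_C' (x : RF k l) : (toL (RF k l)) (RatFunc.C x)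
   = HahnSeries.C x := toL_C x

omit hD in
lemma coe_X' : (toL (RF k l)) (RatFunc.X)
   = tp k l 1 := toL_X

omit hD in
lemma phi_zv (J : Finset (Fin l)) (i : Fin l) :
    phi (k := k) J (zv i) = if i ∈ J then tp k l 1 * HahnSeries.C (zv i) else HahnSeries.C (zv i) := by
  unfold phi
  rw [RingHom.comp_apply, scaleJ_zv]
  split_ifs
  · rw [map_mul, coe_C', coe_X']
  · rw [coe_C']

omit hD in
lemma phi_k (J : Finset (Fin l)) (c : k) :
    phi (k := k) J (algebraMap k _ c) = HahnSeries.C (algebraMap k _ c) := by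
  unfold phi
  rw [RingHom.comp_apply, scaleJ_k, coe_C']

omit hD in
lemma tp_mul (a b : ℤ) : tp k l a * tp k l b = tp k l (a + b) := by
  simp [tp]

omit hD in
lemma tp_zero : tp k l 0 = 1 := rfl

lemma phi_D_mem (J : Finset (Fin l)) (s : Fin l) (hs : s ∈ J) (x : RF k l) :
    phi J (D s x) = tp k l (-1) * cD (D s) (phi J x) := by
  have := derExt (phi J) ((phi J).toAddMonoidHom.comp (D s : RF k l →+ RF k l) -
    (AddMonoidHom.mulLeft (tp k l (-1))).comp ((cD (D s)).comp (phi J).toAddMonoidHom)) ?_ ?_ ?_ x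
  · simpa [sub_eq_zero] using this
  · intro x y
    simp [cD_mul]
    ring
  · intro c
    simp [phi_k, cD_C, -HahnSeries.C_apply]
  · intro i
    have h1 := hD s i
    simp only [AddMonoidHom.sub_apply, AddMonoidHom.comp_apply, RingHom.toAddMonoidHom_eq_coe,
      AddMonoidHom.coe_coe, AddMonoidHom.coe_mulLeft, phi_zv, h1]
    by_cases hi : i = s
    · subst hi
      rw [if_pos rfl, if_pos hs, cD_mul, cD_C, cD_single, h1, if_pos rfl, map_one, map_one,
        mul_one, mul_zero, add_zero, tp_mul]
      simp
    · rw [if_neg hi]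
      split_ifs
      · rw [cD_mul, cD_C, cD_single, h1, if_neg hi]; simp
      · rw [cD_C, h1, if_neg hi]; simp

lemma phi_D_notMem (J : Finset (Fin l)) (s : Fin l) (hs : s ∉ J) (x : RF k l) :
    phi J (D s x) = cD (D s) (phi J x) := by
  have := derExt (phi J) ((phi J).toAddMonoidHom.comp (D s : RF k l →+ RF k l) -
    ((cD (D s)).comp (phi J).toAddMonoidHom)) ?_ ?_ ?_ x
  · simpa [sub_eq_zero] using this
  · intro x y
    simp [cD_mul]
    ring
  · intro c
    simp [phi_k, cD_C, -HahnSeries.C_apply]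
  · intro i
    have h1 := hD s i
    simp only [AddMonoidHom.sub_apply, AddMonoidHom.comp_apply, RingHom.toAddMonoidHom_eq_coe,
      AddMonoidHom.coe_coe, phi_zv, h1]
    by_cases hi : i = s
    · subst hi
      rw [if_pos rfl, if_neg hs, cD_C, h1, if_pos rfl]
      simp
    · rw [if_neg hi]
      split_ifs
      · rw [cD_mul, cD_C, cD_single, h1, if_neg hi]; simp
      · rw [cD_C, h1, if_neg hi]; simp

end partA
end Griess

namespace Griess

section partB
variable {k : Type} [Field k] {l : ℕ}

/-- Vandermonde -/
def Vp (k : Type) [Field k] (l : ℕ) : MvPolynomial (Fin l) k :=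
  ∏ i : Fin l, ∏ j : Fin l, (if i < j then (MvPolynomial.X i - MvPolynomial.X j) else 1)

def VV (k : Type) [Field k] (l : ℕ) : RF k l := algebraMap _ (RF k l) (Vp k l)

lemma VV_eq : VV k l = ∏ i : Fin l, ∏ j : Fin l, (if i < j then (zv i - zv j) else 1) := by
  unfold VV Vp
  rw [map_prod]
  refine Finset.prod_congr rfl fun i _ => ?_
  rw [map_prod]
  refine Finset.prod_congr rfl fun j _ => ?_
  split_ifs
  · rw [map_sub]; rfl
  · simp

lemma zv_ne {i j : Fin l} (h : i ≠ j) : (zv i : RF k l) ≠ zv j := by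
  intro e
  have := IsFractionRing.injective (MvPolynomial (Fin l) k) (RF k l) e
  exact h (MvPolynomial.X_injective this)

lemma zv_ne_zero {i : Fin l} : (zv i : RF k l) ≠ 0 := by
  intro e
  have : (MvPolynomial.X i : MvPolynomial (Fin l) k) = 0 :=
    IsFractionRing.injective (MvPolynomial (Fin l) k) (RF k l) (by rw [map_zero]; exact e)
  exact MvPolynomial.X_ne_zero i this

lemma VV_ne : VV k l ≠ 0 := by
  rw [VV_eq]
  refine Finset.prod_ne_zero_iff.mpr fun i _ => Finset.prod_ne_zero_iff.mpr fun j _ => ?_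
  split_ifs with h
  · exact sub_ne_zero.mpr (zv_ne h.ne)
  · exact one_ne_zero

lemma mem_Phi_iff (x : RF k l) : x ∈ Phi k l ↔
    ∃ (N : ℕ) (p : MvPolynomial (Fin l) k), x * VV k l ^ N = algebraMap _ (RF k l) p := by
  constructor
  · rintro ⟨p, e, rfl⟩
    obtain ⟨N, hN⟩ : ∃ N : ℕ, ∀ i j, 0 ≤ e i j + N := by
      refine ⟨∑ i, ∑ j, (e i j).natAbs, fun i j => ?_⟩
      have h1 : (e i j).natAbs ≤ ∑ j, (e i j).natAbs :=
        Finset.single_le_sum (f := fun j => (e i j).natAbs) (fun _ _ => Nat.zero_le _) (Finset.mem_univ j)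
      have h2 : ∑ j, (e i j).natAbs ≤ ∑ i, ∑ j, (e i j).natAbs :=
        Finset.single_le_sum (f := fun i => ∑ j, (e i j).natAbs) (fun _ _ => Nat.zero_le _) (Finset.mem_univ i)
      omega
    refine ⟨N, p * ∏ i : Fin l, ∏ j : Fin l, (if i < j then
      (MvPolynomial.X i - MvPolynomial.X j) ^ (e i j + N).toNat else 1), ?_⟩
    rw [map_mul, mul_assoc]
    congr 1
    rw [VV_eq, ← Finset.prod_pow, ← Finset.prod_mul_distrib, map_prod]
    refine Finset.prod_congr rfl fun i _ => ?_
    rw [← Finset.prod_pow, ← Finset.prod_mul_distrib, map_prod]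
    refine Finset.prod_congr rfl fun j _ => ?_
    split_ifs with h
    · rw [map_pow, map_sub]
      have := sub_ne_zero.mpr (zv_ne (k := k) h.ne)
      rw [← zpow_natCast, ← zpow_add₀ this]
      conv_lhs => rw [← Int.toNat_of_nonneg (hN i j), zpow_natCast]
      rfl
    · simp
  · rintro ⟨N, p, h⟩
    refine ⟨p, fun _ _ => -(N : ℤ), ?_⟩
    rw [← h, VV_eq, mul_assoc, ← Finset.prod_pow, ← Finset.prod_mul_distrib]
    rw [Finset.prod_eq_one, mul_one]
    intro i _
    rw [← Finset.prod_pow, ← Finset.prod_mul_distrib]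
    apply Finset.prod_eq_one
    intro j _
    split_ifs with h
    · have := sub_ne_zero.mpr (zv_ne (k := k) h.ne)
      rw [zpow_neg, zpow_natCast]
      exact mul_inv_cancel₀ (pow_ne_zero _ this)
    · simp

lemma Phi_add {x y : RF k l} (hx : x ∈ Phi k l) (hy : y ∈ Phi k l) : x + y ∈ Phi k l := by
  rw [mem_Phi_iff] at *
  obtain ⟨N, p, hp⟩ := hx
  obtain ⟨M, q, hq⟩ := hy
  refine ⟨N + M, p * Vp k l ^ M + q * Vp k l ^ N, ?_⟩
  rw [map_add, map_mul, map_mul, map_pow, map_pow, ← hp, ← hq]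
  change _ = x * VV k l ^ N * VV k l ^ M + y * VV k l ^ M * VV k l ^ N
  ring

lemma Phi_mul {x y : RF k l} (hx : x ∈ Phi k l) (hy : y ∈ Phi k l) : x * y ∈ Phi k l := by
  rw [mem_Phi_iff] at *
  obtain ⟨N, p, hp⟩ := hx
  obtain ⟨M, q, hq⟩ := hy
  refine ⟨N + M, p * q, ?_⟩
  rw [map_mul, ← hp, ← hq]
  ring

lemma Phi_poly (p : MvPolynomial (Fin l) k) : algebraMap _ (RF k l) p ∈ Phi k l := by
  rw [mem_Phi_iff]
  exact ⟨0, p, by simp⟩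

lemma Phi_sum {ι : Type} (s : Finset ι) (f : ι → RF k l) (h : ∀ i ∈ s, f i ∈ Phi k l) :
    ∑ i ∈ s, f i ∈ Phi k l := by
  induction s using Finset.induction_on with
  | empty => simpa using Phi_poly (k := k) (l := l) 0
  | insert a s ha ih =>
    rw [Finset.sum_insert ha]
    exact Phi_add (h _ (by simp)) (ih fun i hi => h i (by simp [hi]))

lemma Phi_inv {i j : Fin l} (h : i < j) : (zv i - zv j : RF k l)⁻¹ ∈ Phi k l := by
  rw [mem_Phi_iff]
  have : (MvPolynomial.X i - MvPolynomial.X j) ∣ Vp k l := by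
    unfold Vp
    refine dvd_trans ?_ (Finset.dvd_prod_of_mem _ (Finset.mem_univ i))
    refine dvd_trans ?_ (Finset.dvd_prod_of_mem _ (Finset.mem_univ j))
    simp [h]
  obtain ⟨q, hq⟩ := this
  refine ⟨1, q, ?_⟩
  have h0 := sub_ne_zero.mpr (zv_ne (k := k) h.ne)
  have h1 : VV k l = (zv i - zv j) * algebraMap _ (RF k l) q := by
    unfold VV
    rw [hq, map_mul, map_sub]; rfl
  rw [h1]
  field_simp

variable {D : Fin l → Derivation k (RF k l) (RF k l)} (hD : IsPartialDeriv D)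
include hD

lemma Phi_D (s : Fin l) {x : RF k l} (hx : x ∈ Phi k l) : D s x ∈ Phi k l := by
  rw [mem_Phi_iff] at *
  obtain ⟨N, p, hp⟩ := hx
  refine ⟨N + 1, MvPolynomial.pderiv s p * Vp k l - (N : MvPolynomial (Fin l) k) * p * MvPolynomial.pderiv s (Vp k l), ?_⟩
  have h1 := congrArg (D s) hp
  rw [D_poly hD, Derivation.leibniz, Derivation.leibniz_pow] at h1
  rw [map_sub, map_mul, map_mul, map_mul, ← h1, ← hp, map_natCast, ← D_poly hD s (Vp k l)]
  change _ = _ * VV k l - _ * _ * D s (VV k l)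
  simp only [smul_eq_mul, nsmul_eq_mul]
  rcases N with _ | N
  · simp
  · simp only [Nat.add_sub_cancel]; ring

/-- the derivation `Δ` -/
def dl (D : Fin l → Derivation k (RF k l) (RF k l)) : Derivation k (RF k l) (RF k l) := ∑ i, D i

omit hD in
lemma sum_der_apply {ι : Type} (s : Finset ι) (f : ι → Derivation k (RF k l) (RF k l)) (x : RF k l) :
   (∑ i ∈ s, f i) x = ∑ i ∈ s, f i x := by
  induction s using Finset.induction_on with
  | empty => simp
  | insert a s ha ih => rw [Finset.sum_insert ha, Finset.sum_insert ha, Derivation.add_apply, ih]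

def dlp (k : Type) [Field k] (l : ℕ) (p : MvPolynomial (Fin l) k) : MvPolynomial (Fin l) k :=
  ∑ i, MvPolynomial.pderiv i p

omit hD in
lemma dl_apply (x : RF k l) : dl D x = ∑ i, D i x := sum_der_apply _ _ _

lemma dl_poly (p : MvPolynomial (Fin l) k) :
    dl D (algebraMap _ (RF k l) p) = algebraMap _ (RF k l) (dlp k l p) := by
  rw [dl_apply, dlp, map_sum]
  exact Finset.sum_congr rfl fun i _ => D_poly hD i p

lemma dl_zv (i : Fin l) : dl D (zv i) = 1 := by
  rw [dl_apply]
  simp [hD _ _]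

/-- translation of all the variables by `t` -/
def sg (k : Type) [Field k] (l : ℕ) : MvPolynomial (Fin l) k →+* Polynomial (MvPolynomial (Fin l) k) :=
  (MvPolynomial.aeval (R := k) fun s => Polynomial.X + Polynomial.C (MvPolynomial.X s)).toRingHom

omit hD in
lemma sg_X (i : Fin l) : sg k l (MvPolynomial.X i) = Polynomial.X + Polynomial.C (MvPolynomial.X i) := by
  simp [sg]

omit hD in
lemma sg_C (c : k) : sg k l (MvPolynomial.C c) = Polynomial.C (MvPolynomial.C c) := by
  simp [sg]

omit hD in
lemma sg_eval (p : MvPolynomial (Fin l) k) : Polynomial.eval 0 (sg k l p) = p := by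
  have h : (Polynomial.evalRingHom (0 : MvPolynomial (Fin l) k)).comp (sg k l) = RingHom.id _ := by
    apply MvPolynomial.ringHom_ext
    · intro r; simp [sg_C]
    · intro i; simp [sg_X]
  exact DFunLike.congr_fun h p

omit hD in
lemma sg_derivative (p : MvPolynomial (Fin l) k) :
    Polynomial.derivative (sg k l p) = sg k l (dlp k l p) := by
  induction p using MvPolynomial.induction_on with
  | C a => simp [sg_C, dlp]
  | add p q hp hq =>
    have : dlp k l (p + q) = dlp k l p + dlp k l q := by simp [dlp, Finset.sum_add_distrib]
    rw [this, map_add, map_add, hp, hq, map_add]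
  | mul_X p j hp =>
    have : dlp k l (p * MvPolynomial.X j) = p + MvPolynomial.X j * dlp k l p := by
      simp only [dlp, Derivation.leibniz, Finset.sum_add_distrib, smul_eq_mul, Finset.mul_sum]
      congr 1
      rw [← Finset.mul_sum]
      simp [MvPolynomial.pderiv_X, Pi.single_apply]
    rw [this, map_add, map_mul (sg k l), map_mul (sg k l), Polynomial.derivative_mul, hp, sg_X]
    simp
    ring

omit hD in
lemma dlp_nilp (p : MvPolynomial (Fin l) k) : ∃ r, (dlp k l)^[r] p = 0 := by
  refine ⟨(sg k l p).natDegree + 1, ?_⟩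
  have h : ∀ r, sg k l ((dlp k l)^[r] p) = Polynomial.derivative^[r] (sg k l p) := by
    intro r
    induction r with
    | zero => rfl
    | succ r ih => rw [Function.iterate_succ_apply', Function.iterate_succ_apply', ← ih, sg_derivative]
  rw [← sg_eval ((dlp k l)^[(sg k l p).natDegree + 1] p), h,
    Polynomial.iterate_derivative_eq_zero (Nat.lt_succ_self _)]
  simp

omit hD in
lemma sg_const [CharZero k] (p : MvPolynomial (Fin l) k) (hp : dlp k l p = 0) :
    sg k l p = Polynomial.C p := by
  have h := sg_derivative p
  rw [hp, map_zero] at h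
  have := Polynomial.eq_C_of_natDegree_eq_zero (Polynomial.natDegree_eq_zero_of_derivative_eq_zero h)
  rw [this, Polynomial.coeff_zero_eq_eval_zero, sg_eval]

lemma dl_VV : dl D (VV k l) = 0 := by
  rw [VV_eq]
  have hp : ∀ (s : Finset (Fin l)) (f : Fin l → RF k l), (∀ i, dl D (f i) = 0) →
      dl D (∏ i ∈ s, f i) = 0 := by
    intro s f hf
    induction s using Finset.induction_on with
    | empty => simp
    | insert a s ha ih => rw [Finset.prod_insert ha, Derivation.leibniz, ih, hf]; simp
  apply hp
  intro i
  apply hp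
  intro j
  split_ifs
  · rw [map_sub, dl_zv hD, dl_zv hD, sub_self]
  · simp

lemma dl_nilp {x : RF k l} (hx : x ∈ Phi k l) : ∃ r, (dl D)^[r] x = 0 := by
  rw [mem_Phi_iff] at hx
  obtain ⟨N, p, hp⟩ := hx
  obtain ⟨r, hr⟩ := dlp_nilp p
  refine ⟨r, ?_⟩
  have h : ∀ r, (dl D)^[r] x * VV k l ^ N = algebraMap _ (RF k l) ((dlp k l)^[r] p) := by
    intro r
    induction r with
    | zero => exact hp
    | succ r ih =>
      rw [Function.iterate_succ_apply', Function.iterate_succ_apply', ← dl_poly hD, ← ih,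
        Derivation.leibniz, Derivation.leibniz_pow, dl_VV hD]
      simp [mul_comm]
  have := h r
  rw [hr, map_zero] at this
  exact (mul_eq_zero.mp this).resolve_right (pow_ne_zero _ VV_ne)

end partB
end Griess

namespace Griess

section partC
variable {k : Type} [Field k] {l : ℕ}

/-- `t d/dt` -/
def eD (k : Type) [Field k] (l : ℕ) : LaurentSeries (RF k l) →+ LaurentSeries (RF k l) where
  toFun x :=
    { coeff := fun n => (n : RF k l) * x.coeff n
      isPWO_support' := x.isPWO_support.mono (by
        intro n hn h
        apply hn
        simp [h]) }
  map_zero' := by ext; simp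
  map_add' x y := by ext; simp [mul_add]

lemma eD_coeff (x : LaurentSeries (RF k l)) (n : ℤ) :
    (eD k l x).coeff n = (n : RF k l) * x.coeff n := rfl

lemma eD_mul (x y : LaurentSeries (RF k l)) :
    eD k l (x * y) = x * eD k l y + y * eD k l x := by
  have hs : ∀ x : LaurentSeries (RF k l), (eD k l x).support ⊆ x.support := by
    intro x n hn h
    apply hn
    simp [eD_coeff, h]
  ext n
  rw [mul_comm y, eD_coeff, HahnSeries.coeff_add, HahnSeries.coeff_mul,
    HahnSeries.coeff_mul_right' y.isPWO_support (hs y),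
    HahnSeries.coeff_mul_left' x.isPWO_support (hs x), Finset.mul_sum, ← Finset.sum_add_distrib]
  refine Finset.sum_congr rfl fun ij hij => ?_
  have h1 : ij.1 + ij.2 = n := by simp at hij; exact hij.2.2
  rw [eD_coeff, eD_coeff, ← h1]
  push_cast
  ring

lemma eD_C (x : RF k l) : eD k l (HahnSeries.C x) = 0 := by
  ext n
  rw [eD_coeff, HahnSeries.C_apply, HahnSeries.coeff_single]
  split_ifs with h <;> simp [h]

lemma eD_tp (m : ℤ) : eD k l (tp k l m) = (m : LaurentSeries (RF k l)) * tp k l m := by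
  have : (m : LaurentSeries (RF k l)) = HahnSeries.C (m : RF k l) := by simp [-HahnSeries.C_apply]
  ext n
  rw [this, eD_coeff, HahnSeries.C_apply, HahnSeries.coeff_single_mul, HahnSeries.coeff_single, sub_zero, HahnSeries.coeff_single]
  split_ifs with h <;> simp [h]

lemma phi_inj (J : Finset (Fin l)) : Function.Injective (phi (k := k) J) := (phi J).injective

variable {D : Fin l → Derivation k (RF k l) (RF k l)} (hD : IsPartialDeriv D)
include hD

lemma phi_euler (J : Finset (Fin l)) (x : RF k l) :
    phi J ((∑ i ∈ J, (zv i : RF k l) • D i : Derivation k (RF k l) (RF k l)) x) = eD k l (phi J x) := by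
  have := derExt (phi J) ((phi J).toAddMonoidHom.comp ((∑ i ∈ J, (zv i : RF k l) • D i : Derivation k (RF k l) (RF k l)) : RF k l →+ RF k l) -
    ((eD k l).comp (phi J).toAddMonoidHom)) ?_ ?_ ?_ x
  · simpa [sub_eq_zero] using this
  · intro x y
    simp [eD_mul]
    ring
  · intro c
    simp [phi_k, eD_C, -HahnSeries.C_apply]
  · intro i
    simp only [AddMonoidHom.sub_apply, AddMonoidHom.comp_apply, RingHom.toAddMonoidHom_eq_coe,
      AddMonoidHom.coe_coe]
    rw [sum_der_apply]
    simp only [Derivation.smul_apply, hD _ i, smul_eq_mul, mul_ite, mul_one, mul_zero, Finset.sum_ite_eq,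
      Finset.sum_ite_eq']
    rw [phi_zv]
    split_ifs with h
    · rw [phi_zv, if_pos h, eD_mul, eD_C, eD_tp]
      simp
    · simp [eD_C, -HahnSeries.C_apply]

lemma euler_of_hom (S : Finset (Fin l)) (d : ℤ) (x : RF k l) (h : IsHomogeneousOn S d x) :
    ∑ i ∈ S, zv i * D i x = (d : RF k l) * x := by
  have h1 : phi S x = tp k l d * HahnSeries.C x := by
    unfold phi
    rw [RingHom.comp_apply, h, map_mul, coe_C', map_zpow₀, coe_X', tp, tp, ← RatFunc.single_zpow]
  apply phi_inj S
  have h2 := phi_euler hD S x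
  rw [sum_der_apply] at h2
  simp only [Derivation.smul_apply, smul_eq_mul] at h2
  rw [h2, h1, eD_mul, eD_C, eD_tp, mul_zero, zero_add, map_mul, h1, map_intCast]
  ring

lemma delta_zero [CharZero k] (x : RF k l) (hx : x ∈ Phi k l) (c d : RF k l)
    (hW : ∑ i, zv i ^ 2 * D i x + c * x = 0) (hH : ∑ i, zv i * D i x = d * x)
    (hc : dl D c = -2 * d) (hd : dl D d = 0) : dl D x = 0 := by
  let W : Derivation k (RF k l) (RF k l) := ∑ i, (zv i ^ 2 : RF k l) • D i
  let H : Derivation k (RF k l) (RF k l) := ∑ i, (zv i : RF k l) • D i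
  have hWz : ∀ i, W (zv i) = zv i ^ 2 := by
    intro i; simp only [W]; rw [sum_der_apply]; simp [hD _ i]
  have hHz : ∀ i, H (zv i) = zv i := by
    intro i; simp only [H]; rw [sum_der_apply]; simp [hD _ i]
  have c1 : ∀ y, W (dl D y) = dl D (W y) - 2 * H y := by
    intro y
    have : ⁅W, dl D⁆ = (-2 : RF k l) • H := by
      apply der_ext
      intro i
      rw [Derivation.commutator_apply, dl_zv hD, hWz, Derivation.leibniz_pow, dl_zv hD]
      simp [hHz]
    have := congrArg (fun d => d y) this
    simp only [Derivation.commutator_apply, Derivation.smul_apply, smul_eq_mul] at this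
    linear_combination this
  have c2 : ∀ y, H (dl D y) = dl D (H y) - dl D y := by
    intro y
    have : ⁅H, dl D⁆ = (-1 : RF k l) • dl D := by
      apply der_ext
      intro i
      rw [Derivation.commutator_apply, dl_zv hD, hHz]
      simp [dl_zv hD]
    have := congrArg (fun d => d y) this
    simp only [Derivation.commutator_apply, Derivation.smul_apply, smul_eq_mul] at this
    linear_combination this
  have hW' : W x + c * x = 0 := by
    rw [← hW]; simp only [W]; rw [sum_der_apply]; simp
  have hH' : H x = d * x := by
    rw [← hH]; simp only [H]; rw [sum_der_apply]; simp
  have hHr : ∀ r : ℕ, H ((dl D)^[r] x) = (d - r) * (dl D)^[r] x := by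
    intro r
    induction r with
    | zero => simpa using hH'
    | succ r ih =>
      rw [Function.iterate_succ_apply', c2, ih, Derivation.leibniz, map_sub, hd]
      simp
      ring
  have key : ∀ r : ℕ, W ((dl D)^[r+1] x) + c * (dl D)^[r+1] x = (r + 1) * r * (dl D)^[r] x := by
    intro r
    induction r with
    | zero =>
      have e : W x = - (c * x) := by linear_combination hW'
      simp only [zero_add, Function.iterate_one, Function.iterate_zero, id]
      rw [c1, e, hH', map_neg, Derivation.leibniz, hc]
      simp
      ring
    | succ r ih =>
      have e : W ((dl D)^[r+1] x) = (((r + 1) * r : ℕ) : RF k l) * (dl D)^[r] x - c * (dl D)^[r+1] x := by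
        push_cast
        linear_combination ih
      have hh := hHr (r + 1)
      rw [Function.iterate_succ_apply' _ (r+1), c1, e, hh, map_sub, Derivation.leibniz, Derivation.leibniz, hc,
        Derivation.map_natCast, ← Function.iterate_succ_apply' (dl D) r]
      simp only [smul_eq_mul]
      push_cast
      ring
  obtain ⟨r, hr⟩ := dl_nilp hD hx
  have hr' : (dl D)^[r+1] x = 0 := by rw [Function.iterate_succ_apply', hr, map_zero]
  clear hr
  induction r with
  | zero => simpa using hr'
  | succ r ih =>
    apply ih
    have h := key (r + 1)
    rw [hr'] at h
    simp only [map_zero, mul_zero, add_zero] at h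
    have h2 : ((r + 1 : ℕ) + 1 : RF k l) * (r + 1 : ℕ) ≠ 0 := by
      have : CharZero (RF k l) := charZero_of_injective_algebraMap (algebraMap k (RF k l)).injective
      norm_cast
    exact (mul_eq_zero.mp h.symm).resolve_left h2

/-- depends only on S -/
lemma D_dep {S : Finset (Fin l)} {i : Fin l} (hi : i ∉ S) {x : RF k l} (hx : dependsOnlyOn S x) :
    D i x = 0 := by
  unfold dependsOnlyOn at hx
  induction hx using Subfield.closure_induction with
  | mem x h =>
    rcases h with ⟨c, rfl⟩ | ⟨j, hj, rfl⟩
    · simp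
    · rw [hD, if_neg]; rintro rfl; exact hi hj
  | one => simp
  | add x y _ _ hx hy => rw [map_add, hx, hy, add_zero]
  | neg x _ hx => rw [map_neg, hx, neg_zero]
  | inv x _ hx =>
    rw [Derivation.leibniz_inv, hx, smul_zero]
  | mul x y _ _ hx hy => rw [Derivation.leibniz, hx, hy]; simp

omit hD in
lemma phi_dep {S : Finset (Fin l)} {J J' : Finset (Fin l)} (hJ : ∀ i ∈ S, (i ∈ J ↔ i ∈ J'))
    {x : RF k l} (hx : dependsOnlyOn S x) : phi J x = phi J' x := by
  refine RingHom.eqOn_field_closure (f := phi J) (g := phi J') ?_ hx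
  rintro x (⟨c, rfl⟩ | ⟨j, hj, rfl⟩)
  · rw [phi_k, phi_k]
  · rw [phi_zv, phi_zv]; simp [hJ j hj]

omit hD in
lemma dep_univ (x : RF k l) : dependsOnlyOn Finset.univ x := by
  unfold dependsOnlyOn
  set F := Subfield.closure (Set.range (algebraMap k (RF k l)) ∪ {x | ∃ i ∈ Finset.univ, x = zv i}) with hF
  have hp : ∀ p : MvPolynomial (Fin l) k, algebraMap _ (RF k l) p ∈ F := by
    intro p
    induction p using MvPolynomial.induction_on with
    | C a =>
      refine Subfield.subset_closure (Or.inl ⟨a, ?_⟩)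
      rw [IsScalarTower.algebraMap_apply k (MvPolynomial (Fin l) k) (RF k l)]; rfl
    | add p q hp hq => rw [map_add]; exact add_mem hp hq
    | mul_X p i hp =>
      rw [map_mul]
      exact mul_mem hp (Subfield.subset_closure (Or.inr ⟨i, Finset.mem_univ _, rfl⟩))
  obtain ⟨a, b, hb, h⟩ := RF_frac x
  rw [eq_div_of_mul_eq hb h]
  exact div_mem (hp _) (hp _)

omit hD in
lemma shift_zv {S : Finset (Fin l)} {t : Fin l} (ht : t ∉ S) (i : Fin l) :
    shiftT S t ht (zv i : RF k l) = if i ∈ S then zv i - zv t else zv i := by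
  unfold shiftT zv
  erw [IsFractionRing.lift_algebraMap]
  split_ifs with h <;> simp [shiftAuxP, h]

omit hD in
lemma shift_poly {S : Finset (Fin l)} {t : Fin l} (ht : t ∉ S) (p : MvPolynomial (Fin l) k) :
    shiftT S t ht (algebraMap _ (RF k l) p) = algebraMap _ (RF k l) (shiftAuxP k l S t p) := by
  unfold shiftT
  erw [IsFractionRing.lift_algebraMap]
  rfl

omit hD in
lemma shift_k {S : Finset (Fin l)} {t : Fin l} (ht : t ∉ S) (c : k) :
    shiftT S t ht (algebraMap k (RF k l) c) = algebraMap k _ c := by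
  rw [IsScalarTower.algebraMap_apply k (MvPolynomial (Fin l) k) (RF k l), shift_poly]
  simp [shiftAuxP]

lemma shift_D {S : Finset (Fin l)} {t : Fin l} (ht : t ∉ S) {s : Fin l} (hs : s ∈ S) (x : RF k l) :
    shiftT S t ht (D s x) = D s (shiftT S t ht x) := by
  have := derExt (shiftT S t ht) ((shiftT S t ht).toAddMonoidHom.comp (D s : RF k l →+ RF k l) -
    ((D s : RF k l →+ RF k l).comp (shiftT S t ht).toAddMonoidHom)) ?_ ?_ ?_ x
  · simpa [sub_eq_zero] using this
  · intro x y
    simp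
    ring
  · intro c
    simp [shift_k]
  · intro i
    have hst : t ≠ s := by rintro rfl; exact ht hs
    simp only [AddMonoidHom.sub_apply, AddMonoidHom.comp_apply, RingHom.toAddMonoidHom_eq_coe,
      AddMonoidHom.coe_coe, shift_zv]
    have h1 := hD s i
    split_ifs with h
    · rw [map_sub, h1, hD s t, if_neg hst]
      split_ifs <;> simp
    · rw [h1]
      split_ifs <;> simp

lemma shift_inv [CharZero k] {S : Finset (Fin l)} {t : Fin l} (ht : t ∉ S) {x : RF k l} (hx : x ∈ Phi k l)
    (hdep : dependsOnlyOn S x) (hdl : dl D x = 0) : shiftT S t ht x = x := by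
  obtain ⟨N, P, hP⟩ := (mem_Phi_iff x).mp hx
  have hPd : dlp k l P = 0 := by
    apply IsFractionRing.injective (MvPolynomial (Fin l) k) (RF k l)
    rw [← dl_poly hD, ← hP, Derivation.leibniz, Derivation.leibniz_pow, hdl, dl_VV hD]
    simp
  have hVd : dlp k l (Vp k l) = 0 := by
    apply IsFractionRing.injective (MvPolynomial (Fin l) k) (RF k l)
    rw [← dl_poly hD]
    rw [map_zero]
    exact dl_VV hD
  let ev : MvPolynomial (Fin l) k →+* MvPolynomial (Fin l) k :=
    (Polynomial.evalRingHom (-MvPolynomial.X t)).comp (sg k l)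
  have hev : ∀ p, dlp k l p = 0 → ev p = p := by
    intro p hp
    simp only [ev, RingHom.comp_apply, sg_const p hp]
    simp
  have hcl : ∀ y ∈ Subring.closure (Set.range (algebraMap k (RF k l)) ∪ {x | ∃ i ∈ S, x = zv i}),
      y ∈ Subring.map (algebraMap _ (RF k l)) (ev.eqLocus (shiftAuxP k l S t)) := by
    intro y hy
    refine (Subring.closure_le.mpr ?_) hy
    rintro y (⟨c, rfl⟩ | ⟨j, hj, rfl⟩)
    · refine ⟨MvPolynomial.C c, ?_, ?_⟩
      · change ev _ = shiftAuxP k l S t _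
        simp [ev, sg_C, shiftAuxP]
      · rw [IsScalarTower.algebraMap_apply k (MvPolynomial (Fin l) k) (RF k l)]; rfl
    · refine ⟨MvPolynomial.X j, ?_, rfl⟩
      change ev _ = shiftAuxP k l S t _
      simp [ev, sg_X, shiftAuxP, hj]
      ring
  obtain ⟨y, hy, z, hz, hyz⟩ := Subfield.mem_closure_iff.mp hdep
  obtain ⟨a, ha, rfl⟩ := hcl y hy
  obtain ⟨b, hb, rfl⟩ := hcl z hz
  change ev _ = shiftAuxP k l S t _ at ha hb
  by_cases hb0 : algebraMap _ (RF k l) b = 0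
  · rw [← hyz, hb0]; simp
  have e1 : a * Vp k l ^ N = b * P := by
    apply IsFractionRing.injective (MvPolynomial (Fin l) k) (RF k l)
    rw [map_mul, map_mul, map_pow, ← hP, ← hyz]
    change _ * VV k l ^ N = _
    field_simp
  have e2 := congrArg ev e1
  rw [map_mul, map_mul, map_pow, hev _ hVd, hev _ hPd, ha, hb] at e2
  have e3 := congrArg (algebraMap _ (RF k l)) e2
  rw [map_mul, map_mul, map_pow, ← hP, ← shift_poly ht, ← shift_poly ht] at e3
  change _ * VV k l ^ N = _ at e3
  have hb1 : shiftT S t ht (algebraMap _ (RF k l) b) ≠ 0 := by simpa using hb0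
  have hV : VV k l ^ N ≠ 0 := pow_ne_zero _ VV_ne
  conv_lhs => rw [← hyz, map_div₀]
  rw [div_eq_iff hb1]
  apply mul_right_cancel₀ hV
  rw [e3]; ring

end partC
end Griess

namespace Griess

section partD
variable {k : Type} [Field k] {l : ℕ}

lemma inv_sub_swap {F : Type} [Field F] (a b : F) : (a - b)⁻¹ = -(b - a)⁻¹ := by
  rw [← neg_sub, inv_neg]

def InM (x : LaurentSeries (RF k l)) : Prop := ∀ n : ℤ, (n < 0 ∨ n = 1) → x.coeff n = 0

def OO (k : Type) [Field k] (l : ℕ) : Subring (LaurentSeries (RF k l)) :=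
  (HahnSeries.ofPowerSeries ℤ (RF k l)).range

lemma InM.add {x y : LaurentSeries (RF k l)} (hx : InM x) (hy : InM y) : InM (x + y) := by
  intro n hn
  rw [HahnSeries.coeff_add, hx n hn, hy n hn, add_zero]

lemma InM.neg {x : LaurentSeries (RF k l)} (hx : InM x) : InM (-x) := by
  intro n hn
  rw [HahnSeries.coeff_neg, hx n hn, neg_zero]

lemma InM.sum {ι : Type} (s : Finset ι) (f : ι → LaurentSeries (RF k l)) (h : ∀ i ∈ s, InM (f i)) :
    InM (∑ i ∈ s, f i) := by
  induction s using Finset.induction_on with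
  | empty => intro n hn; simp
  | insert a s ha ih =>
    rw [Finset.sum_insert ha]
    exact InM.add (h _ (by simp)) (ih fun i hi => h i (by simp [hi]))

lemma InM.C_mul {x : LaurentSeries (RF k l)} (c : RF k l) (hx : InM x) : InM (HahnSeries.C c * x) := by
  intro n hn
  rw [HahnSeries.C_apply, HahnSeries.coeff_single_mul, sub_zero, hx n hn, mul_zero]

lemma InM.cD {x : LaurentSeries (RF k l)} (d : Derivation k (RF k l) (RF k l)) (hx : InM x) :
    InM (cD d x) := by
  intro n hn
  rw [cD_coeff, hx n hn, map_zero]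

lemma InM.mem_OO {x : LaurentSeries (RF k l)} (hx : InM x) : x ∈ OO k l := by
  refine ⟨PowerSeries.mk fun n => x.coeff n, ?_⟩
  ext n
  have := LaurentSeries.coeff_coe_powerSeries (R := RF k l)
  rcases lt_or_ge n 0 with h | h
  · rw [hx n (Or.inl h), PowerSeries.coeff_coe, if_pos h]
  · rw [PowerSeries.coeff_coe, if_neg (not_lt.mpr h), PowerSeries.coeff_mk, Int.natAbs_of_nonneg h]

lemma InM_t2 {x : LaurentSeries (RF k l)} (hx : x ∈ OO k l) : InM (tp k l 1 ^ 2 * x) := by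
  obtain ⟨p, rfl⟩ := hx
  intro n hn
  have : tp k l 1 ^ 2 = tp k l 2 := by rw [pow_two, tp_mul]; rfl
  rw [this, HahnSeries.coeff_single_mul, PowerSeries.coeff_coe, if_pos (by omega), mul_zero]

lemma C_mem_OO (c : RF k l) : HahnSeries.C c ∈ OO k l := ⟨PowerSeries.C c, HahnSeries.ofPowerSeries_C c⟩

lemma inv_mem_OO {a b : RF k l} (ha : a ≠ 0) :
    (HahnSeries.C a - tp k l 1 * HahnSeries.C b)⁻¹ ∈ OO k l := by
  let p : PowerSeries (RF k l) := PowerSeries.C a - PowerSeries.X * PowerSeries.C b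
  have hp : PowerSeries.constantCoeff p ≠ 0 := by simpa [p] using ha
  have h1 := congrArg (HahnSeries.ofPowerSeries ℤ (RF k l)) (PowerSeries.mul_inv_cancel p hp)
  refine ⟨p⁻¹, ?_⟩
  apply eq_inv_of_mul_eq_one_right
  rw [map_mul, map_one] at h1
  rw [← h1]
  congr 1
  simp only [p]
  rw [map_sub, map_mul, HahnSeries.ofPowerSeries_C, HahnSeries.ofPowerSeries_C, HahnSeries.ofPowerSeries_X]

lemma tp_ne (m : ℤ) : tp k l m ≠ 0 := by
  simp [tp]

lemma tp_neg_one : tp k l (-1) = (tp k l 1)⁻¹ := by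
  apply eq_inv_of_mul_eq_one_left
  rw [tp_mul]; rfl

lemma cD_tp_mul (d : Derivation k (RF k l) (RF k l)) (m : ℤ) (x : LaurentSeries (RF k l)) :
    cD d (tp k l m * x) = tp k l m * cD d x := by
  rw [cD_mul, cD_single, mul_zero, add_zero]

lemma comp_eq (J : Finset (Fin l)) (n : ℤ) (x : RF k l) :
    component J (fun _ => 2) n x = (tp k l (2 * J.card) * phi J x).coeff n := by
  rw [HahnSeries.coeff_single_mul, one_mul]
  unfold component
  rw [lcoeff_eq, Finset.sum_const, nsmul_eq_mul, mul_comm]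
  rfl

variable {D : Fin l → Derivation k (RF k l) (RF k l)} (hD : IsPartialDeriv D)

/-- the terms of the shifted function -/
def alph (D : Fin l → Derivation k (RF k l) (RF k l)) (ll s : Fin l) (β : RF k l) : RF k l :=
  -((zv s - zv ll)⁻¹ * D s β) + 2 * (zv s - zv ll)⁻¹ ^ 2 * β

section terms
variable (J : Finset (Fin l)) (ll s : Fin l) (hs : s ≠ ll) (β : RF k l) (m : ℤ)
include hD

lemma term_in_in (h1 : s ∈ J) (h2 : ll ∈ J) :
    tp k l m * tp k l 1 ^ 2 * phi J (alph D ll s β) =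
     -(HahnSeries.C (zv s - zv ll)⁻¹ * cD (D s) (tp k l m * phi J β)) +
      HahnSeries.C (2 * (zv s - zv ll)⁻¹ ^ 2) * (tp k l m * phi J β) := by
  have ht := tp_ne (k := k) (l := l) 1
  rw [cD_tp_mul]
  simp only [alph, map_add, map_neg, map_mul, map_inv₀, map_sub, phi_zv, h1, h2, if_true, map_pow,
    phi_D_mem hD J s h1, tp_neg_one, ← mul_sub, mul_inv, map_ofNat]
  generalize ((HahnSeries.C (zv s) - HahnSeries.C (zv ll))⁻¹ : LaurentSeries (RF k l)) = u
  generalize cD (D s) (phi J β) = w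
  field_simp

lemma term_out_out (h1 : s ∉ J) (h2 : ll ∉ J) :
    tp k l m * phi J (alph D ll s β) =
     -(HahnSeries.C (zv s - zv ll)⁻¹ * cD (D s) (tp k l m * phi J β)) +
      HahnSeries.C (2 * (zv s - zv ll)⁻¹ ^ 2) * (tp k l m * phi J β) := by
  rw [cD_tp_mul]
  simp only [alph, map_add, map_neg, map_mul, map_inv₀, map_sub, phi_zv, h1, h2, if_false, map_pow,
    phi_D_notMem hD J s h1, map_ofNat]
  ring

lemma term_out_in (h1 : s ∉ J) (h2 : ll ∈ J) :
    tp k l m * tp k l 1 ^ 2 * phi J (alph D ll s β) = tp k l 1 ^ 2 *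
     (-((HahnSeries.C (zv s) - tp k l 1 * HahnSeries.C (zv ll))⁻¹ * cD (D s) (tp k l m * phi J β)) +
      2 * (HahnSeries.C (zv s) - tp k l 1 * HahnSeries.C (zv ll))⁻¹ ^ 2 * (tp k l m * phi J β)) := by
  rw [cD_tp_mul]
  simp only [alph, map_add, map_neg, map_mul, map_inv₀, map_sub, phi_zv, h1, h2, if_false, if_true, map_pow,
    phi_D_notMem hD J s h1, map_ofNat]
  ring

lemma term_in_out (h1 : s ∈ J) (h2 : ll ∉ J) (hB : InM (tp k l m * phi J β)) :
    ∃ r, InM r ∧ tp k l m * phi J (alph D ll s β) =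
      HahnSeries.C (zv ll)⁻¹ * ((tp k l 1)⁻¹ * cD (D s) (tp k l m * phi J β)) +
      HahnSeries.C ((zv ll)⁻¹ ^ 3) * (tp k l 1 * (HahnSeries.C (zv s) ^ 2 * cD (D s) (tp k l m * phi J β)
        + 4 * HahnSeries.C (zv s) * (tp k l m * phi J β))) + r := by
  have ht := tp_ne (k := k) (l := l) 1
  have hlz : (zv ll : RF k l) ≠ 0 := zv_ne_zero
  have hv0 := inv_mem_OO (k := k) (l := l) (a := zv ll) (b := zv s) hlz
  have hvne : (HahnSeries.C (zv ll) - tp k l 1 * HahnSeries.C (zv s) : LaurentSeries (RF k l)) ≠ 0 := by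
    intro h
    have := congrArg (fun x => HahnSeries.coeff x 0) h
    simp [HahnSeries.coeff_single] at this
    exact hlz this
  have hvv : (HahnSeries.C (zv ll) - tp k l 1 * HahnSeries.C (zv s) : LaurentSeries (RF k l))⁻¹ =
     HahnSeries.C (zv ll)⁻¹ + tp k l 1 * HahnSeries.C (zv s) * HahnSeries.C (zv ll)⁻¹ *
       (HahnSeries.C (zv ll) - tp k l 1 * HahnSeries.C (zv s))⁻¹ := by
    have hC : (HahnSeries.C (zv ll) : LaurentSeries (RF k l)) ≠ 0 := by
      simpa [-HahnSeries.C_apply] using hlz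
    rw [map_inv₀]
    field_simp
    ring
  have hterm : tp k l m * phi J (alph D ll s β) =
      (HahnSeries.C (zv ll) - tp k l 1 * HahnSeries.C (zv s))⁻¹ * (tp k l 1)⁻¹ *
         cD (D s) (tp k l m * phi J β) +
      2 * (HahnSeries.C (zv ll) - tp k l 1 * HahnSeries.C (zv s))⁻¹ ^ 2 * (tp k l m * phi J β) := by
    rw [cD_tp_mul]
    simp only [alph, map_add, map_neg, map_mul, map_inv₀, map_sub, phi_zv, h1, h2, if_false, if_true, map_pow,
      phi_D_mem hD J s h1, map_ofNat, tp_neg_one]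
    have e : (tp k l 1 * HahnSeries.C (zv s) - HahnSeries.C (zv ll) : LaurentSeries (RF k l))⁻¹ =
      -(HahnSeries.C (zv ll) - tp k l 1 * HahnSeries.C (zv s))⁻¹ := by
      exact inv_sub_swap _ _
    rw [e]
    ring
  have hd := hB.cD (D s)
  have hdO := hd.mem_OO
  have hBO := hB.mem_OO
  rw [hterm]
  generalize cD (D s) (tp k l m * phi J β) = d at *
  generalize tp k l m * phi J β = B at *
  generalize (HahnSeries.C (zv ll) - tp k l 1 * HahnSeries.C (zv s) : LaurentSeries (RF k l))⁻¹ = v at *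
  have hzO := C_mem_OO (k := k) (l := l) (zv s)
  have haO := C_mem_OO (k := k) (l := l) (zv ll)⁻¹
  refine ⟨HahnSeries.C (zv s * (zv ll)⁻¹ ^ 2) * d + HahnSeries.C (2 * (zv ll)⁻¹ ^ 2) * B +
    tp k l 1 ^ 2 * (HahnSeries.C (zv s) ^ 3 * HahnSeries.C (zv ll)⁻¹ ^ 3 * v * d +
      2 * (2 * HahnSeries.C (zv s) ^ 2 * HahnSeries.C (zv ll)⁻¹ ^ 3 * v +
        HahnSeries.C (zv s) ^ 2 * HahnSeries.C (zv ll)⁻¹ ^ 2 * v ^ 2) * B), ?_, ?_⟩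
  · refine ((hd.C_mul _).add (hB.C_mul _)).add (InM_t2 ?_)
    have two : (2 : LaurentSeries (RF k l)) ∈ OO k l := ofNat_mem _ 2
    exact add_mem (mul_mem (mul_mem (mul_mem (pow_mem hzO _) (pow_mem haO _)) hv0) hdO)
      (mul_mem (mul_mem two (add_mem (mul_mem (mul_mem (mul_mem two (pow_mem hzO _)) (pow_mem haO _)) hv0)
        (mul_mem (mul_mem (pow_mem hzO _) (pow_mem haO _)) (pow_mem hv0 _)))) hBO)
  · rw [map_mul, map_mul, map_pow, map_pow, map_ofNat]
    generalize (HahnSeries.C (zv ll)⁻¹ : LaurentSeries (RF k l)) = a at *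
    generalize (HahnSeries.C (zv s) : LaurentSeries (RF k l)) = z at *
    generalize tp k l 1 = t at *
    clear hterm hd hB hvne hv0 hdO hBO hzO haO
    have e3 : v = a + t * z * a ^ 2 + t ^ 2 * z ^ 2 * a ^ 3 + t ^ 3 * z ^ 3 * a ^ 3 * v := by
      linear_combination (1 + t * z * a + t ^ 2 * z ^ 2 * a ^ 2) * hvv
    have e2 : v ^ 2 = a ^ 2 + 2 * t * z * a ^ 3 + t ^ 2 * (2 * z ^ 2 * a ^ 3 * v + z ^ 2 * a ^ 2 * v ^ 2) := by
      linear_combination (v + a + t * z * a * v + 2 * t * z * a ^ 2) * hvv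
    have e4 : v * t⁻¹ = a * t⁻¹ + z * a ^ 2 + t * z ^ 2 * a ^ 3 + t ^ 2 * z ^ 3 * a ^ 3 * v := by
      conv_lhs => rw [e3]
      field_simp
    linear_combination d * e4 + 2 * B * e2

end terms

include hD

lemma comp_main (ll : Fin l) (β : RF k l) (hdep : dependsOnlyOn ({ll}ᶜ : Finset (Fin l)) β)
    (hreg : (∑ i ∈ ({ll}ᶜ : Finset (Fin l)), ((zv i) ^ 2 * D i β + 4 * zv i * β)) = 0)
    (hdl : ∑ i ∈ ({ll}ᶜ : Finset (Fin l)), D i β = 0)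
    (hc : ∀ J ⊆ ({ll}ᶜ : Finset (Fin l)), ∀ n : ℤ, (n < 0 ∨ n = 1) → component J (fun _ => 2) n β = 0)
    (J : Finset (Fin l)) :
    InM (tp k l (2 * J.card) * phi J (∑ s ∈ ({ll}ᶜ : Finset (Fin l)), alph D ll s β)) := by
  by_cases hJ : ll ∈ J
  · have hB : InM (tp k l (2 * (J.erase ll).card) * phi J β) := by
      rw [phi_dep (J' := J.erase ll) (S := ({ll}ᶜ : Finset (Fin l))) (by
        intro i hi; simp at hi; simp [hi]) hdep]
      intro n hn
      rw [← comp_eq]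
      refine hc _ ?_ n hn
      intro i hi
      rw [Finset.mem_compl, Finset.mem_singleton]
      exact (Finset.mem_erase.mp hi).1
    have hcard : tp k l (2 * J.card) = tp k l (2 * (J.erase ll).card) * tp k l 1 ^ 2 := by
      rw [pow_two, tp_mul, tp_mul, ← Finset.card_erase_add_one hJ]
      congr 1
    rw [map_sum, Finset.mul_sum, hcard]
    refine InM.sum _ _ fun s hs => ?_
    have hsl : s ≠ ll := by simpa using hs
    by_cases h : s ∈ J
    · rw [term_in_in hD J ll s β _ h hJ]
      exact ((hB.cD _).C_mul _).neg.add (hB.C_mul _)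
    · rw [term_out_in hD J ll s β _ h hJ]
      apply InM_t2
      have hv := inv_mem_OO (k := k) (l := l) (a := zv s) (b := zv ll) zv_ne_zero
      exact add_mem (neg_mem (mul_mem hv (hB.cD _).mem_OO))
        (mul_mem (mul_mem (ofNat_mem _ 2) (pow_mem hv _)) hB.mem_OO)
  · have hJS : J ⊆ ({ll}ᶜ : Finset (Fin l)) := by
      intro i hi
      simp
      rintro rfl
      exact hJ hi
    have hB : InM (tp k l (2 * J.card) * phi J β) := by
      intro n hn
      rw [← comp_eq]
      exact hc _ hJS n hn
    set m : ℤ := 2 * J.card with hm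
    rw [map_sum, Finset.mul_sum, ← Finset.sum_sdiff hJS]
    refine InM.add (InM.sum _ _ fun s hs => ?_) ?_
    · rw [term_out_out hD J ll s β _ (Finset.mem_sdiff.mp hs).2 hJ]
      exact ((hB.cD _).C_mul _).neg.add (hB.C_mul _)
    · have hex : ∀ s : Fin l, ∃ r, s ∈ J → InM r ∧ tp k l m * phi J (alph D ll s β) =
          HahnSeries.C (zv ll)⁻¹ * ((tp k l 1)⁻¹ * cD (D s) (tp k l m * phi J β)) +
          HahnSeries.C ((zv ll)⁻¹ ^ 3) * (tp k l 1 * (HahnSeries.C (zv s) ^ 2 * cD (D s) (tp k l m * phi J β)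
            + 4 * HahnSeries.C (zv s) * (tp k l m * phi J β))) + r := by
        intro s
        by_cases h : s ∈ J
        · obtain ⟨r, hr⟩ := term_in_out hD J ll s β m h hJ hB
          exact ⟨r, fun _ => hr⟩
        · exact ⟨0, fun h' => absurd h' h⟩
      choose r hr using hex
      rw [Finset.sum_congr rfl fun s hs => (hr s hs).2, Finset.sum_add_distrib, Finset.sum_add_distrib,
        ← Finset.mul_sum, ← Finset.mul_sum, ← Finset.mul_sum, ← Finset.mul_sum]
      have ht := tp_ne (k := k) (l := l) 1
      refine InM.add (InM.add (InM.C_mul _ ?_) (InM.C_mul _ ?_)) (InM.sum _ _ fun s hs => (hr s hs).1)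
      · have h := congrArg (fun x => tp k l m * phi J x) hdl
        simp only [map_zero, mul_zero, map_sum] at h
        rw [← Finset.sum_sdiff hJS, mul_add, Finset.mul_sum, Finset.mul_sum] at h
        have e1 : ∑ s ∈ J, tp k l m * phi J (D s β) = (tp k l 1)⁻¹ * ∑ s ∈ J, cD (D s) (tp k l m * phi J β) := by
          rw [Finset.mul_sum]
          refine Finset.sum_congr rfl fun s hs => ?_
          rw [phi_D_mem hD J s hs, cD_tp_mul, tp_neg_one]; ring
        rw [← e1, eq_neg_of_add_eq_zero_right h]
        refine (InM.sum _ _ fun s hs => ?_).neg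
        rw [phi_D_notMem hD J s (Finset.mem_sdiff.mp hs).2, ← cD_tp_mul]
        exact hB.cD _
      · have h := congrArg (fun x => tp k l m * phi J x) hreg
        simp only [map_zero, mul_zero, map_sum] at h
        rw [← Finset.sum_sdiff hJS, mul_add, Finset.mul_sum, Finset.mul_sum] at h
        have e1 : ∑ s ∈ J, tp k l m * phi J (zv s ^ 2 * D s β + 4 * zv s * β) =
           tp k l 1 * ∑ s ∈ J, (HahnSeries.C (zv s) ^ 2 * cD (D s) (tp k l m * phi J β)
            + 4 * HahnSeries.C (zv s) * (tp k l m * phi J β)) := by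
          rw [Finset.mul_sum]
          refine Finset.sum_congr rfl fun s hs => ?_
          rw [map_add, map_mul, map_mul, map_mul, map_pow, phi_zv, if_pos hs, phi_D_mem hD J s hs, cD_tp_mul, tp_neg_one,
            map_ofNat]
          field_simp
        rw [← e1, eq_neg_of_add_eq_zero_right h]
        refine (InM.sum _ _ fun s hs => ?_).neg
        have hs' := (Finset.mem_sdiff.mp hs).2
        have e2 : tp k l m * phi J (zv s ^ 2 * D s β + 4 * zv s * β) =
           HahnSeries.C (zv s ^ 2) * cD (D s) (tp k l m * phi J β)
            + HahnSeries.C (4 * zv s) * (tp k l m * phi J β) := by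
          rw [map_add, map_mul, map_mul, map_mul, map_pow, phi_zv, if_neg hs', phi_D_notMem hD J s hs', cD_tp_mul,
            map_ofNat, map_pow, map_mul, map_ofNat]
          ring
        rw [e2]
        exact ((hB.cD _).C_mul _).add (hB.C_mul _)

end partD
end Griess

namespace Griess

section partE
variable {k : Type} [Field k] {l : ℕ}
variable {D : Fin l → Derivation k (RF k l) (RF k l)} (hD : IsPartialDeriv D)
include hD

lemma alph_phi (ll s : Fin l) (β : RF k l) (d : ℤ) (h : phi Finset.univ β = tp k l d * HahnSeries.C β) :
    phi Finset.univ (alph D ll s β) = tp k l (d - 2) * HahnSeries.C (alph D ll s β) := by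
  have e : tp k l (d - 2) = tp k l d * (tp k l 1)⁻¹ ^ 2 := by
    rw [← tp_neg_one, pow_two, tp_mul, tp_mul]
    congr 1
  have e2 : (tp k l 1 * HahnSeries.C (zv s) - tp k l 1 * HahnSeries.C (zv ll) : LaurentSeries (RF k l))⁻¹
      = (tp k l 1)⁻¹ * (HahnSeries.C (zv s) - HahnSeries.C (zv ll))⁻¹ := by
    rw [← mul_sub]; exact mul_inv _ _
  simp only [alph, map_add, map_neg, map_mul, map_inv₀, map_sub, phi_zv, Finset.mem_univ, if_true, map_pow,
      phi_D_mem hD Finset.univ s (Finset.mem_univ s), map_ofNat, tp_neg_one, h, cD_tp_mul, cD_C, e, e2]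
  ring

lemma alph_reg (ll s : Fin l) (hs : s ≠ ll) (β c : RF k l) (hc : D s c = 4)
    (hW : ∑ i, zv i ^ 2 * D i β + c * β = 0) :
    ∑ i, zv i ^ 2 * D i (alph D ll s β) + (c + 4 * zv ll) * alph D ll s β = 3 * D s β := by
  let W : Derivation k (RF k l) (RF k l) := ∑ i, (zv i ^ 2 : RF k l) • D i
  have hWa : ∀ x, W x = ∑ i, zv i ^ 2 * D i x := by
    intro x; simp only [W]; rw [sum_der_apply]; simp
  have hWz : ∀ i, W (zv i) = zv i ^ 2 := by
    intro i; rw [hWa]; simp [hD _ i]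
  have c1 : ∀ y, W (D s y) = D s (W y) - 2 * zv s * D s y := by
    intro y
    have : ⁅W, D s⁆ = (-2 * zv s : RF k l) • D s := by
      apply der_ext
      intro i
      rw [Derivation.commutator_apply, hD s i, hWz, Derivation.leibniz_pow, hD s i]
      by_cases h : i = s
      · simp [h, hD s s]
      · simp [h, hD s i]
    have := congrArg (fun d => d y) this
    simp only [Derivation.commutator_apply, Derivation.smul_apply, smul_eq_mul] at this
    linear_combination this
  rw [← hWa] at hW ⊢
  have hb : W β = - c * β := by linear_combination hW
  have hds : W (D s β) = -4 * β - c * D s β - 2 * zv s * D s β := by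
    rw [c1, hb, Derivation.leibniz, map_neg, hc]
    simp only [smul_eq_mul]; ring
  have hne : (zv s - zv ll : RF k l) ≠ 0 := sub_ne_zero.mpr (zv_ne hs)
  have hu : W ((zv s - zv ll)⁻¹) = -((zv s - zv ll)⁻¹ * (zv s + zv ll)) := by
    rw [Derivation.leibniz_inv, map_sub, hWz, hWz, smul_eq_mul]
    field_simp
    ring
  unfold alph
  have h2 : W (2 : RF k l) = 0 := by
    have := W.map_natCast 2
    simpa using this
  rw [map_add, map_neg, Derivation.leibniz, Derivation.leibniz, Derivation.leibniz, Derivation.leibniz_pow,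
    hds, hu, hb, h2]
  simp only [smul_eq_mul, nsmul_eq_mul]
  have hu1 : (zv s - zv ll : RF k l)⁻¹ * (zv s - zv ll) = 1 := inv_mul_cancel₀ hne
  generalize (zv s - zv ll : RF k l)⁻¹ = u at *
  push_cast
  simp only [Nat.reduceSub, pow_one, smul_zero, mul_zero]
  linear_combination (3 * D s β - 4 * u * β) * hu1

end partE
end Griess

namespace Griess

/-- if `β ∈ R^{l-1}` is an admissible function of `z₁,…,z_{l-1}`
(`z_l` corresponding to the index `ll`), then `Tℰβ` is an admissible function in
`R^l`, i.e. an admissible function of all `l` variables. -/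
theorem statement16 {k : Type} [Field k] [CharZero k] {l : ℕ} (hl : 3 ≤ l)
    (D : Fin l → Derivation k (RF k l) (RF k l)) (hD : IsPartialDeriv D)
    (ll : Fin l) (hll : (ll : ℕ) = l - 1)
    (β : RF k l) (hβ : Admissible D ({ll}ᶜ : Finset (Fin l)) β) :
    Admissible D Finset.univ
      (shiftT ({ll}ᶜ : Finset (Fin l)) ll (by simp) (curlyE D ({ll}ᶜ) β)) := by
  obtain ⟨hPhi, hdep, hreg, hhom, hcomp⟩ := hβ
  have hsum : ∀ f : Fin l → RF k l, ∑ i, f i = f ll + ∑ i ∈ ({ll}ᶜ : Finset (Fin l)), f i :=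
    fun f => Fintype.sum_eq_add_sum_compl ll f
  have hDl : D ll β = 0 := D_dep hD (S := ({ll}ᶜ : Finset (Fin l))) (by simp) hdep
  have hW : ∑ i, zv i ^ 2 * D i β + (4 * ∑ i ∈ ({ll}ᶜ : Finset (Fin l)), zv i) * β = 0 := by
    rw [hsum, hDl, mul_zero, zero_add, Finset.mul_sum, Finset.sum_mul, ← Finset.sum_add_distrib]
    exact hreg
  have hH : ∑ i, zv i * D i β = ((-(2 * (({ll}ᶜ : Finset (Fin l)).card : ℤ)) : ℤ) : RF k l) * β := by
    rw [hsum, hDl, mul_zero, zero_add]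
    exact euler_of_hom hD _ _ _ hhom
  have h4 : ∀ E : Derivation k (RF k l) (RF k l), E (4 : RF k l) = 0 := by
    intro E
    have := E.map_natCast 4
    simpa using this
  have hdl : dl D β = 0 := by
    refine delta_zero hD β hPhi _ _ hW hH ?_ (Derivation.map_intCast _ _)
    rw [Derivation.leibniz, h4, map_sum]
    simp only [dl_zv hD, smul_eq_mul, mul_zero, add_zero, Finset.sum_const, nsmul_eq_mul]
    push_cast
    ring
  have hdlS : ∑ i ∈ ({ll}ᶜ : Finset (Fin l)), D i β = 0 := by
    rw [dl_apply, hsum, hDl, zero_add] at hdl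
    exact hdl
  have hT : shiftT ({ll}ᶜ : Finset (Fin l)) ll (by simp) (curlyE D ({ll}ᶜ) β) =
      ∑ s ∈ ({ll}ᶜ : Finset (Fin l)), alph D ll s β := by
    unfold curlyE
    rw [map_sum]
    refine Finset.sum_congr rfl fun s hs => ?_
    have hll' : ll ∉ ({ll}ᶜ : Finset (Fin l)) := by simp
    rw [map_add, map_neg, map_mul, map_mul, map_mul, map_inv₀, map_zpow₀, shift_zv, if_pos hs,
      shift_D hD _ hs, shift_inv hD hll' hPhi hdep hdl, map_ofNat, zpow_neg, alph, inv_pow]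
    rfl
  rw [hT]
  have hcard : (Finset.univ : Finset (Fin l)).card = ({ll}ᶜ : Finset (Fin l)).card + 1 := by
    rw [Finset.card_compl, Finset.card_singleton, Fintype.card_fin, Finset.card_univ, Fintype.card_fin]
    omega
  refine ⟨?_, dep_univ _, ?_, ?_, ?_⟩
  · refine Phi_sum _ _ fun s hs => ?_
    have hsl : s ≠ ll := by simpa using hs
    have hlt : s < ll := by
      rw [Fin.lt_def]
      have : (s : ℕ) ≠ ll := fun h => hsl (Fin.ext h)
      have := s.2
      omega
    have h2 : (2 : RF k l) ∈ Phi k l := by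
      have := Phi_poly (k := k) (l := l) 2
      rwa [map_ofNat] at this
    have h1 : (-1 : RF k l) ∈ Phi k l := by simpa using Phi_poly (k := k) (l := l) (-1)
    unfold alph
    refine Phi_add ?_ (Phi_mul (Phi_mul h2 ?_) hPhi)
    · rw [← neg_one_mul]
      exact Phi_mul h1 (Phi_mul (Phi_inv hlt) (Phi_D hD s hPhi))
    · rw [pow_two]
      exact Phi_mul (Phi_inv hlt) (Phi_inv hlt)
  · have key : ∀ s ∈ ({ll}ᶜ : Finset (Fin l)),
        ∑ i, (zv i ^ 2 * D i (alph D ll s β) + 4 * zv i * alph D ll s β) = 3 * D s β := by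
      intro s hs
      have hsl : s ≠ ll := by simpa using hs
      rw [← alph_reg hD ll s hsl β (4 * ∑ i ∈ ({ll}ᶜ : Finset (Fin l)), zv i) ?_ hW]
      · rw [Finset.sum_add_distrib, ← Finset.sum_mul, ← Finset.mul_sum, hsum (fun i => zv i)]
        ring
      · rw [Derivation.leibniz, h4, map_sum]
        simp only [hD s _, Finset.sum_ite_eq', hs, if_true]
        simp
    have e : ∀ i, zv i ^ 2 * D i (∑ s ∈ ({ll}ᶜ : Finset (Fin l)), alph D ll s β) +
        4 * zv i * (∑ s ∈ ({ll}ᶜ : Finset (Fin l)), alph D ll s β) =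
        ∑ s ∈ ({ll}ᶜ : Finset (Fin l)), (zv i ^ 2 * D i (alph D ll s β) + 4 * zv i * alph D ll s β) := by
      intro i
      rw [map_sum, Finset.mul_sum, Finset.mul_sum, Finset.sum_add_distrib]
    rw [Finset.sum_congr rfl (fun i _ => e i), Finset.sum_comm, Finset.sum_congr rfl key,
      ← Finset.mul_sum, hdlS, mul_zero]
  · have h1 : phi Finset.univ β = tp k l (-(2 * (({ll}ᶜ : Finset (Fin l)).card : ℤ))) * HahnSeries.C β := by
      rw [phi_dep (J' := ({ll}ᶜ : Finset (Fin l))) (S := ({ll}ᶜ : Finset (Fin l))) (by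
        intro i hi; simp [Finset.mem_compl.mp hi]) hdep]
      unfold phi
      rw [RingHom.comp_apply, hhom, map_mul, coe_C', map_zpow₀, coe_X', tp, tp, ← RatFunc.single_zpow]
    have h2 : phi Finset.univ (∑ s ∈ ({ll}ᶜ : Finset (Fin l)), alph D ll s β) =
        tp k l (-(2 * ((Finset.univ : Finset (Fin l)).card : ℤ))) *
          HahnSeries.C (∑ s ∈ ({ll}ᶜ : Finset (Fin l)), alph D ll s β) := by
      rw [map_sum, map_sum, Finset.mul_sum]
      refine Finset.sum_congr rfl fun s hs => ?_
      rw [alph_phi hD ll s β _ h1, hcard]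
      congr 2
      push_cast
      ring
    unfold IsHomogeneousOn
    apply (toL (RF k l)).injective
    rw [map_mul, coe_C', map_zpow₀, coe_X', tp, ← RatFunc.single_zpow]
    exact h2
  · intro J _ n hn
    rw [comp_eq]
    exact comp_main hD ll β hdep hreg hdlS hcomp J n hn

end Griess
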